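/- With the notation of the context, h₊ is twice (complex-)differentiable at z and h₊''(z) = 2·φ₊(z), where φ₊(z) = ((N²−1)/(24N²))·(F₁² + F₂² + F₃²) + ((N−1)(N−5)/(12N²))·(F₁ + F₃)·F₂ + ((N²−12N+23)/(12N²))·F₁·F₃, with F₁ = Σ_{i∈I₁} (z − λ_i)^{−1} − Σ_{j∈J₂} (z − λ_j)^{−1}, F₂ = Σ_{i∈I₂} (z − λ_i)^{−1} − Σ_{j∈J₁} (z − λ_j)^{−1}, and F₃ = (z − λ_{i*})^{−1} − (z − λ_{j*})^{−1}. (This is the second-order coefficient φ[e_{m+1}] of Corollary 4.4 of the paper, in the coordinate x = λ where the Schwarzian term vanishes.) -/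

import Mathlib

open Finset

/-- `f` has logarithmic derivative `L` near `z` and `f z = 1`. -/
def LogD (z : ℂ) (f L : ℂ → ℂ) : Prop :=
  f z = 1 ∧ ∀ᶠ w in nhds z, HasDerivAt f (f w * L w) w

theorem LogD.mul {z : ℂ} {f g L M : ℂ → ℂ} (hf : LogD z f L) (hg : LogD z g M) :
    LogD z (fun w => f w * g w) (fun w => L w + M w) := by
  refine ⟨by simp [hf.1, hg.1], ?_⟩
  filter_upwards [hf.2, hg.2] with w h1 h2
  exact (h1.mul h2).congr_deriv (by ring)

theorem LogD.prod {K : Type*} [DecidableEq K] {z : ℂ} (S : Finset K) {f L : K → ℂ → ℂ}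
    (h : ∀ k, LogD z (f k) (L k)) :
    LogD z (fun w => ∏ k ∈ S, f k w) (fun w => ∑ k ∈ S, L k w) := by
  induction S using Finset.induction_on with
  | empty =>
    refine ⟨by simp, Filter.Eventually.of_forall fun w => ?_⟩
    simpa using hasDerivAt_const w (1 : ℂ)
  | insert k S hk ih =>
    simp only [Finset.prod_insert hk, Finset.sum_insert hk]
    exact (h k).mul ih

theorem LogD.psi {z l : ℂ} (hz : z ≠ l) (α : ℂ) :
    LogD z (fun w => ((z - l) / (w - l)) ^ α) (fun w => -α * (w - l)⁻¹) := by
  have hzl : z - l ≠ 0 := sub_ne_zero.2 hz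
  refine ⟨by simp [div_self hzl], ?_⟩
  have h1 : ∀ᶠ w in nhds z, w - l ≠ 0 :=
    (continuous_id.sub continuous_const).continuousAt.eventually_ne hzl
  have hc : ContinuousAt (fun w => (z - l) / (w - l)) z :=
    continuousAt_const.div (continuous_id.sub continuous_const).continuousAt hzl
  have h2 : ∀ᶠ w in nhds z, (z - l) / (w - l) ∈ Complex.slitPlane := by
    apply hc.eventually_mem
    rw [div_self hzl]
    exact Complex.isOpen_slitPlane.mem_nhds Complex.one_mem_slitPlane
  filter_upwards [h1, h2] with w hw1 hw2
  have hd : HasDerivAt (fun w => (z - l) / (w - l)) (-(z - l) / (w - l) ^ 2) w := by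
    have := (hasDerivAt_const w (z - l)).div ((hasDerivAt_id w).sub_const l) hw1
    exact this.congr_deriv (by simp)
  refine (hd.cpow_const hw2).congr_deriv ?_
  have hne : (z - l) / (w - l) ≠ 0 := div_ne_zero hzl hw1
  rw [Complex.cpow_sub _ _ hne, Complex.cpow_one]
  field_simp

theorem sum_lin (n : ℕ) (u v : ℂ) :
    ∑ s ∈ range n, (u + v * s) = n * u + v * (n * (n - 1) / 2) := by
  induction n with
  | zero => simp
  | succ n ih => rw [sum_range_succ, ih]; push_cast; ring

theorem sum_quad (n : ℕ) (u v : ℂ) :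
    ∑ s ∈ range n, (u + v * s) ^ 2 =
      n * u ^ 2 + u * v * (n * (n - 1)) + v ^ 2 * (n * (n - 1) * (2 * n - 1) / 6) := by
  induction n with
  | zero => simp
  | succ n ih => rw [sum_range_succ, ih]; push_cast; ring

theorem second_of_logD {z : ℂ} (N : ℕ) (f L : ℕ → ℂ → ℂ) (L' : ℕ → ℂ)
    (h : ∀ s, LogD z (f s) (L s)) (hL : ∀ s, HasDerivAt (L s) (L' s) z) (F : ℂ → ℂ)
    (hF : F = fun w => (N : ℂ)⁻¹ * ∑ s ∈ range N, f s w) :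
    (∀ᶠ w in nhds z, DifferentiableAt ℂ F w) ∧ DifferentiableAt ℂ (deriv F) z ∧
    deriv (deriv F) z = (N : ℂ)⁻¹ * ∑ s ∈ range N, (L s z ^ 2 + L' s) := by
  have h1 : ∀ᶠ w in nhds z,
      HasDerivAt F ((N : ℂ)⁻¹ * ∑ s ∈ range N, f s w * L s w) w := by
    have : ∀ᶠ w in nhds z, ∀ s ∈ range N, HasDerivAt (f s) (f s w * L s w) w :=
      (Filter.eventually_all_finset _).2 fun s _ => (h s).2
    filter_upwards [this] with w hw
    rw [hF]
    exact (HasDerivAt.fun_sum hw).const_mul _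
  have h2 : deriv F =ᶠ[nhds z] fun w => (N : ℂ)⁻¹ * ∑ s ∈ range N, f s w * L s w := by
    filter_upwards [h1] with w hw using hw.deriv
  have h3 : HasDerivAt (fun w => (N : ℂ)⁻¹ * ∑ s ∈ range N, f s w * L s w)
      ((N : ℂ)⁻¹ * ∑ s ∈ range N, (L s z ^ 2 + L' s)) z := by
    refine HasDerivAt.const_mul _ (HasDerivAt.fun_sum fun s _ => ?_)
    refine ((h s).2.self_of_nhds.mul (hL s)).congr_deriv ?_
    rw [(h s).1]; ring
  have h4 := h3.congr_of_eventuallyEq h2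
  exact ⟨h1.mono fun w hw => hw.differentiableAt, h4.differentiableAt, h4.deriv⟩

theorem hasDerivAt_inv_sub {z l : ℂ} (hz : z ≠ l) :
    HasDerivAt (fun w => (w - l)⁻¹) (-((z - l) ^ 2)⁻¹) z := by
  have := ((hasDerivAt_id z).sub_const l).inv (sub_ne_zero.2 hz)
  exact this.congr_deriv (by simp [neg_div])

theorem fract_small (n : ℕ) (x : ℝ) (h0 : 0 ≤ x) (h1 : x < n + 2) :
    Int.fract (x / ((n : ℝ) + 2)) = x / (n + 2) := by
  have : (0 : ℝ) < n + 2 := by positivity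
  rw [Int.fract_eq_self]
  exact ⟨by positivity, (div_lt_one this).2 h1⟩

theorem fract_big (n : ℕ) (x : ℝ) (h0 : 0 ≤ x) (h1 : x < n + 2) :
    Int.fract ((x + (n + 2)) / ((n : ℝ) + 2)) = x / (n + 2) := by
  have : (n : ℝ) + 2 ≠ 0 := by positivity
  rw [add_div, div_self this, Int.fract_add_one, fract_small n x h0 h1]

theorem sums_abc (N : ℕ) (hN : 2 ≤ N) (a b c : ℕ → ℝ)
    (ha : ∀ s, a s = ((N : ℝ) - 1) / (2 * N) - (s : ℝ) / N)
    (hb : ∀ s, b s = ((N : ℝ) - 1) / (2 * N) - Int.fract (((s : ℝ) + 1) / N))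
    (hc : ∀ s, c s = ((N : ℝ) - 1) / (2 * N) - Int.fract (((s : ℝ) + 2) / N))
    (X Y Z : ℂ) :
    ∑ s ∈ range N, ((a s : ℂ) * X + b s * Y + c s * Z) = 0 ∧
    (N : ℂ)⁻¹ * ∑ s ∈ range N, ((a s : ℂ) * X + b s * Y + c s * Z) ^ 2 =
      2 * ((((N : ℂ) ^ 2 - 1) / (24 * (N : ℂ) ^ 2)) * (X ^ 2 + Y ^ 2 + Z ^ 2) +
        (((N : ℂ) - 1) * ((N : ℂ) - 5) / (12 * (N : ℂ) ^ 2)) * (X + Z) * Y +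
        (((N : ℂ) ^ 2 - 12 * N + 23) / (12 * (N : ℂ) ^ 2)) * X * Z) := by
  obtain ⟨n, rfl⟩ := Nat.exists_eq_add_of_le' hN
  push_cast at ha hb hc ⊢
  have hn : (n : ℝ) + 2 ≠ 0 := by positivity
  have hnC : (n : ℂ) + 2 ≠ 0 := by exact_mod_cast hn
  have hb1 : ∀ s : ℕ, s < n + 1 →
      b s = ((n : ℝ) + 2 - 1) / (2 * (n + 2)) - (s + 1) / (n + 2) := by
    intro s hs
    have : (s : ℝ) < n + 1 := by exact_mod_cast hs
    rw [hb, fract_small n _ (by positivity) (by linarith)]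
  have hb2 : b (n + 1) = ((n : ℝ) + 2 - 1) / (2 * (n + 2)) := by
    have := fract_big n 0 le_rfl (by positivity)
    rw [hb, show (((n + 1 : ℕ) : ℝ) + 1) = 0 + (n + 2) by push_cast; ring, this]
    simp
  have hc1 : ∀ s : ℕ, s < n →
      c s = ((n : ℝ) + 2 - 1) / (2 * (n + 2)) - (s + 2) / (n + 2) := by
    intro s hs
    have : (s : ℝ) < n := by exact_mod_cast hs
    rw [hc, fract_small n _ (by positivity) (by linarith)]
  have hc2 : c n = ((n : ℝ) + 2 - 1) / (2 * (n + 2)) := by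
    have := fract_big n 0 le_rfl (by positivity)
    rw [hc, show ((n : ℝ) + 2) = 0 + (n + 2) by ring, zero_add ((n : ℝ) + 2)]
    simp [div_self hn]
  have hc3 : c (n + 1) = ((n : ℝ) + 2 - 1) / (2 * (n + 2)) - 1 / (n + 2) := by
    have := fract_big n 1 zero_le_one (by have : (0 : ℝ) ≤ n := by positivity
                                          linarith)
    rw [hc, show (((n + 1 : ℕ) : ℝ) + 2) = 1 + (n + 2) by push_cast; ring, this]
  have key : ∀ s ∈ range n, ((a s : ℂ) * X + b s * Y + c s * Z) =
      ((n + 1) / (2 * (n + 2)) * (X + Y + Z) - Y / (n + 2) - 2 * Z / (n + 2)) +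
        (-(X + Y + Z) / (n + 2)) * s := by
    intro s hs
    have hs := mem_range.1 hs
    rw [ha, hb1 s (by omega), hc1 s hs]
    push_cast
    field_simp
    ring
  rw [sum_range_succ, sum_range_succ, sum_range_succ, sum_range_succ,
    sum_congr rfl key, sum_congr rfl (fun s hs => congrArg (· ^ 2) (key s hs)),
    sum_lin, sum_quad, ha, ha, hb1 n (by omega), hb2, hc2, hc3]
  push_cast
  constructor
  · field_simp
    ring
  · field_simp
    ring

/-- Second-order coefficient in the diagonal expansion of the algebraic Szegő
kernel `S[e_{m+1}]` (Corollary 4.4): `hplus` is twice differentiable at `z` and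
`hplus'' z = 2 φ[e_{m+1}](z)` in the coordinate `x = λ`. -/
theorem szego_em1_second_deriv
    {K : Type*} [Fintype K] [DecidableEq K]
    (N : ℕ) (hN : 2 ≤ N)
    (lam : K → ℂ) (hlam : Function.Injective lam)
    (I₁ I₂ J₁ J₂ : Finset K)
    (h12 : Disjoint I₁ I₂) (h1J1 : Disjoint I₁ J₁) (h1J2 : Disjoint I₁ J₂)
    (h2J1 : Disjoint I₂ J₁) (h2J2 : Disjoint I₂ J₂) (hJ12 : Disjoint J₁ J₂)
    (istar jstar : K) (hij : istar ≠ jstar)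
    (histar : istar ∉ I₁ ∪ I₂ ∪ J₁ ∪ J₂) (hjstar : jstar ∉ I₁ ∪ I₂ ∪ J₁ ∪ J₂)
    (z : ℂ) (hz : ∀ k, z ≠ lam k)
    (a b c : ℕ → ℝ)
    (ha : ∀ s, a s = ((N : ℝ) - 1) / (2 * N) - (s : ℝ) / N)
    (hb : ∀ s, b s = ((N : ℝ) - 1) / (2 * N) - Int.fract (((s : ℝ) + 1) / N))
    (hc : ∀ s, c s = ((N : ℝ) - 1) / (2 * N) - Int.fract (((s : ℝ) + 2) / N))
    (hplus : ℂ → ℂ)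
    (hh : ∀ w, hplus w = (N : ℂ)⁻¹ * ∑ s ∈ Finset.range N,
      (∏ i ∈ I₁, ((z - lam i) / (w - lam i)) ^ ((a s : ℝ) : ℂ)) *
      (∏ j ∈ J₂, ((z - lam j) / (w - lam j)) ^ ((-(a s) : ℝ) : ℂ)) *
      (∏ i ∈ I₂, ((z - lam i) / (w - lam i)) ^ ((b s : ℝ) : ℂ)) *
      (∏ j ∈ J₁, ((z - lam j) / (w - lam j)) ^ ((-(b s) : ℝ) : ℂ)) *
      (((z - lam istar) / (w - lam istar)) ^ ((c s : ℝ) : ℂ)) *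
      (((z - lam jstar) / (w - lam jstar)) ^ ((-(c s) : ℝ) : ℂ)))
    (F₁ F₂ F₃ : ℂ)
    (hF₁ : F₁ = (∑ i ∈ I₁, (z - lam i)⁻¹) - ∑ j ∈ J₂, (z - lam j)⁻¹)
    (hF₂ : F₂ = (∑ i ∈ I₂, (z - lam i)⁻¹) - ∑ j ∈ J₁, (z - lam j)⁻¹)
    (hF₃ : F₃ = (z - lam istar)⁻¹ - (z - lam jstar)⁻¹) :
    (∀ᶠ w in nhds z, DifferentiableAt ℂ hplus w) ∧
    DifferentiableAt ℂ (deriv hplus) z ∧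
    deriv (deriv hplus) z =
      2 * ((((N : ℂ) ^ 2 - 1) / (24 * (N : ℂ) ^ 2)) * (F₁ ^ 2 + F₂ ^ 2 + F₃ ^ 2) +
        (((N : ℂ) - 1) * ((N : ℂ) - 5) / (12 * (N : ℂ) ^ 2)) * (F₁ + F₃) * F₂ +
        (((N : ℂ) ^ 2 - 12 * N + 23) / (12 * (N : ℂ) ^ 2)) * F₁ * F₃) := by
  let α : ℕ → ℂ := fun s => a s
  let G : K → ℂ → ℂ := fun k w => (w - lam k)⁻¹
  let G' : K → ℂ := fun k => -((z - lam k) ^ 2)⁻¹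
  have hG : ∀ k, HasDerivAt (G k) (G' k) z := fun k => hasDerivAt_inv_sub (hz k)
  have hps : ∀ (x : ℝ) (k : K), LogD z (fun w => ((z - lam k) / (w - lam k)) ^ (x : ℂ))
      (fun w => -(x : ℂ) * G k w) := fun x k => LogD.psi (hz k) x
  have hf := fun s => ((((((LogD.prod I₁ (hps (a s))).mul (LogD.prod J₂ (hps (-(a s))))).mul
    (LogD.prod I₂ (hps (b s)))).mul (LogD.prod J₁ (hps (-(b s))))).mul
    (hps (c s) istar)).mul (hps (-(c s)) jstar))
  have hS : ∀ (x : ℝ) (S : Finset K), HasDerivAt (fun w => ∑ k ∈ S, -(x : ℂ) * G k w)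
      (∑ k ∈ S, -(x : ℂ) * G' k) z :=
    fun x S => HasDerivAt.fun_sum fun k _ => (hG k).const_mul _
  have hL := fun s => ((((((hS (a s) I₁).add (hS (-(a s)) J₂)).add
    (hS (b s) I₂)).add (hS (-(b s)) J₁)).add
    ((hG istar).const_mul (-(c s : ℂ)))).add ((hG jstar).const_mul (-((-(c s) : ℝ) : ℂ))))
  have main := second_of_logD N _ _ _ hf hL hplus (funext hh)
  refine ⟨main.1, main.2.1, main.2.2.trans ?_⟩
  rw [← (sums_abc N hN a b c ha hb hc F₁ F₂ F₃).2]
  have lin := (sums_abc N hN a b c ha hb hc (∑ k ∈ I₁, G' k - ∑ k ∈ J₂, G' k)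
    (∑ k ∈ I₂, G' k - ∑ k ∈ J₁, G' k) (G' istar - G' jstar)).1
  congr 1
  rw [← sub_zero (∑ s ∈ range N, ((a s : ℂ) * F₁ + b s * F₂ + c s * F₃) ^ 2), ← lin,
    ← sum_sub_distrib]
  refine sum_congr rfl fun s _ => ?_
  rw [hF₁, hF₂, hF₃]
  simp only [← mul_sum, G]
  push_cast
  ring
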